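/- arXiv:1207.6371 — 4 statements merged into one kernel-verified Lean document; each statement's English description precedes it below -/
import Mathlib

section
/- For every weighted graph G with terminal set K of size k, there exists a mimicking network H for (G,K) whose number of vertices is at most M(k−1), the (k−1)-st Dedekind number, i.e. the number of antichains in the power set of a (k−1)-element set ordered by inclusion. -/
open scoped Classical

/-- A weighted graph with a distinguished embedded set of terminals indexed by `κ`:
a finite vertex type `V`, an embedding `ι : κ ↪ V` of the terminals, and a symmetric
nonnegative capacity function `c` on pairs of vertices. -/
structure WeightedGraph (κ : Type) where
  V : Type
  [fintypeV : Fintype V]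
  ι : κ ↪ V
  c : V → V → ℝ
  symm : ∀ u v, c u v = c v u
  nonneg : ∀ u v, 0 ≤ c u v

namespace WeightedGraph

variable {κ : Type}

instance (G : WeightedGraph κ) : Fintype G.V := G.fintypeV

/-- The cut function `h_G(A) = Σ_{u ∈ A, v ∉ A} c(u,v)`. -/
noncomputable def cutval (G : WeightedGraph κ) (A : Finset G.V) : ℝ :=
  ∑ u ∈ A, ∑ v ∈ Aᶜ, G.c u v

/-- The vertex sets realizing the terminal partition `(U, K \ U)`. -/
noncomputable def cutSets (G : WeightedGraph κ) (U : Finset κ) : Finset (Finset G.V) :=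
  Finset.univ.filter fun A => ∀ x : κ, G.ι x ∈ A ↔ x ∈ U

theorem cutSets_nonempty (G : WeightedGraph κ) (U : Finset κ) : (G.cutSets U).Nonempty := by
  refine ⟨U.image G.ι, ?_⟩
  simp [cutSets, Finset.mem_image, G.ι.injective.eq_iff]

/-- The terminal cut function `h_K^G(U) = min { h_G(A) : A ∩ K = U }`. -/
noncomputable def termCut (G : WeightedGraph κ) (U : Finset κ) : ℝ :=
  (G.cutSets U).inf' (G.cutSets_nonempty U) G.cutval

/-- `H` is a mimicking network for `(G, K)`: all minimum terminal cut values agree. -/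
def IsMimicking (G H : WeightedGraph κ) : Prop :=
  ∀ U : Finset κ, H.termCut U = G.termCut U

/-- `H` is a quotient (contraction) of `G` along the surjection `f`: terminals map to
terminals, and capacities between distinct classes are sums of the original capacities. -/
def IsQuotient (G H : WeightedGraph κ) (f : G.V → H.V) : Prop :=
  Function.Surjective f ∧ (∀ x : κ, f (G.ι x) = H.ι x) ∧
    ∀ y z : H.V, y ≠ z →
      H.c y z = ∑ u ∈ Finset.univ.filter (fun u => f u = y),
        ∑ v ∈ Finset.univ.filter (fun v => f v = z), G.c u v

end WeightedGraph

/-- The `n`-th Dedekind number: the number of antichains in the power set of an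
`n`-element set ordered by inclusion. -/
noncomputable def dedekind (n : ℕ) : ℕ :=
  Nat.card {A : Finset (Finset (Fin n)) // IsAntichain (· ⊆ ·) (A : Set (Finset (Fin n)))}

/-!
By submodularity of the cut function, the minimum cuts realizing `U` are closed under intersection,
and the least one grows with `U`. Fix a root terminal; by complementation it suffices to preserve
the cuts whose terminal part avoids the root. The sets `U` avoiding the root whose least minimum cut
contains a given vertex `v` form an upper set in a Boolean lattice on `k - 1` points. Merging
vertices with equal upper sets leaves all these least cuts intact, and upper sets correspond to
antichains.
-/

theorem upperClosure_setOf_minimal {α : Type*} [Preorder α] [WellFoundedLT α] (S : UpperSet α) :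
    upperClosure {a | Minimal (· ∈ S) a} = S := by
  ext a
  refine ⟨fun ⟨b, hb, hba⟩ => S.upper hba hb.prop, fun ha => ?_⟩
  obtain ⟨b, hba, hb⟩ := exists_minimal_le_of_wellFoundedLT (· ∈ S) a ha
  exact ⟨b, hb, hba⟩

/-- In a finite partial order, an upper set amounts to the antichain of its minimal elements. The
antichains are finsets, to match `dedekind`. -/
noncomputable def upperSetEquivAntichain {α : Type*} [PartialOrder α] [Finite α] :
    UpperSet α ≃ {A : Finset α // IsAntichain (· ≤ ·) (A : Set α)} where
  toFun S := ⟨(Set.toFinite {a | Minimal (· ∈ S) a}).toFinset, by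
    simpa only [Set.Finite.coe_toFinset] using setOfPred_minimal_antichain (· ∈ S)⟩
  invFun A := upperClosure (A.1 : Set α)
  left_inv S := by
    simpa only [Set.Finite.coe_toFinset] using upperClosure_setOf_minimal S
  right_inv A := by
    ext a
    exact (Set.Finite.mem_toFinset _).trans A.2.minimal_mem_upperClosure_iff_mem

theorem card_upperSet_finset_fin (n : ℕ) : Nat.card (UpperSet (Finset (Fin n))) = dedekind n :=
  Nat.card_congr upperSetEquivAntichain

namespace WeightedGraph

variable {κ : Type}

theorem finite_terminals (G : WeightedGraph κ) : Finite κ :=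
  Finite.of_injective G.ι G.ι.injective

section Cuts

variable (G : WeightedGraph κ)

theorem cutval_eq_sum_ite (A : Finset G.V) :
    G.cutval A = ∑ u, ∑ v, if u ∈ A ∧ v ∉ A then G.c u v else 0 := by
  simp [cutval, ite_and, Finset.sum_ite_mem, ← Finset.mem_compl]

theorem cutval_inter_add_cutval_union_le (A B : Finset G.V) :
    G.cutval (A ∩ B) + G.cutval (A ∪ B) ≤ G.cutval A + G.cutval B := by
  simp only [cutval_eq_sum_ite, ← Finset.sum_add_distrib]
  refine Finset.sum_le_sum fun u _ => Finset.sum_le_sum fun v _ => ?_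
  have := G.nonneg u v
  by_cases u ∈ A <;> by_cases u ∈ B <;> by_cases v ∈ A <;> by_cases v ∈ B <;> simp [*]

theorem cutval_compl (A : Finset G.V) : G.cutval Aᶜ = G.cutval A := by
  unfold cutval
  rw [compl_compl, Finset.sum_comm]
  exact Finset.sum_congr rfl fun u _ => Finset.sum_congr rfl fun v _ => G.symm v u

variable {G} {U W : Finset κ} {A B : Finset G.V}

theorem mem_cutSets : A ∈ G.cutSets U ↔ ∀ x, G.ι x ∈ A ↔ x ∈ U := by
  simp [cutSets]

theorem termCut_le_cutval (hA : A ∈ G.cutSets U) : G.termCut U ≤ G.cutval A :=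
  Finset.inf'_le _ hA

theorem inter_mem_cutSets (hUW : U ⊆ W) (hA : A ∈ G.cutSets U) (hB : B ∈ G.cutSets W) :
    A ∩ B ∈ G.cutSets U := by
  rw [mem_cutSets] at *
  intro x
  rw [Finset.mem_inter, hA, hB, and_iff_left_of_imp (@hUW x)]

theorem union_mem_cutSets (hUW : U ⊆ W) (hA : A ∈ G.cutSets U) (hB : B ∈ G.cutSets W) :
    A ∪ B ∈ G.cutSets W := by
  rw [mem_cutSets] at *
  intro x
  rw [Finset.mem_union, hA, hB, or_iff_right_of_imp (@hUW x)]

theorem compl_mem_cutSets_compl_iff [Fintype κ] : Aᶜ ∈ G.cutSets Uᶜ ↔ A ∈ G.cutSets U := by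
  simp only [mem_cutSets, Finset.mem_compl, not_iff_not]

variable (G) in
theorem termCut_compl_le [Fintype κ] (U : Finset κ) : G.termCut Uᶜ ≤ G.termCut U :=
  Finset.le_inf' _ _ fun A hA =>
    (termCut_le_cutval (compl_mem_cutSets_compl_iff.mpr hA)).trans_eq (G.cutval_compl A)

variable (G) in
theorem termCut_compl [Fintype κ] (U : Finset κ) : G.termCut Uᶜ = G.termCut U :=
  (G.termCut_compl_le U).antisymm <| by simpa only [compl_compl] using G.termCut_compl_le Uᶜ

end Cuts

section MinCuts

/-- The minimum cuts separating the terminals `U` from the other terminals. -/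
noncomputable def minCuts (G : WeightedGraph κ) (U : Finset κ) : Finset (Finset G.V) :=
  {A ∈ G.cutSets U | G.cutval A = G.termCut U}

variable {G : WeightedGraph κ} {U W : Finset κ} {A B : Finset G.V}

theorem mem_minCuts : A ∈ G.minCuts U ↔ A ∈ G.cutSets U ∧ G.cutval A = G.termCut U :=
  Finset.mem_filter

variable (G U) in
theorem minCuts_nonempty : (G.minCuts U).Nonempty := by
  obtain ⟨A, hA, hmin⟩ := Finset.exists_mem_eq_inf' (G.cutSets_nonempty U) G.cutval
  exact ⟨A, mem_minCuts.mpr ⟨hA, hmin.symm⟩⟩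

theorem compl_mem_minCuts_compl [Fintype κ] (hA : A ∈ G.minCuts U) : Aᶜ ∈ G.minCuts Uᶜ := by
  rw [mem_minCuts] at *
  rwa [compl_mem_cutSets_compl_iff, cutval_compl, termCut_compl]

theorem inter_mem_minCuts (hUW : U ⊆ W) (hA : A ∈ G.minCuts U) (hB : B ∈ G.minCuts W) :
    A ∩ B ∈ G.minCuts U := by
  rw [mem_minCuts] at *
  have hinter := inter_mem_cutSets hUW hA.1 hB.1
  have hunion := union_mem_cutSets hUW hA.1 hB.1
  refine ⟨hinter, ?_⟩
  linarith [termCut_le_cutval hinter, termCut_le_cutval hunion,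
    G.cutval_inter_add_cutval_union_le A B]

/-- The least minimum cut realizing `U`, constructed as the intersection of all of them. -/
noncomputable def leastMinCut (G : WeightedGraph κ) (U : Finset κ) : Finset G.V :=
  (G.minCuts U).inf' (G.minCuts_nonempty U) id

variable (G) in
theorem leastMinCut_mem_minCuts (U : Finset κ) : G.leastMinCut U ∈ G.minCuts U :=
  Finset.inf'_mem (G.minCuts U : Set (Finset G.V))
    (fun _ hA _ hB => inter_mem_minCuts subset_rfl hA hB) _ _ _ fun _ hA => hA

theorem leastMinCut_subset (hA : A ∈ G.minCuts U) : G.leastMinCut U ⊆ A :=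
  Finset.inf'_le id hA

variable (G) in
theorem leastMinCut_mono : Monotone G.leastMinCut := fun U W hUW =>
  (leastMinCut_subset <| inter_mem_minCuts hUW (G.leastMinCut_mem_minCuts U)
    (G.leastMinCut_mem_minCuts W)).trans Finset.inter_subset_right

theorem terminal_mem_leastMinCut_iff {x : κ} : G.ι x ∈ G.leastMinCut U ↔ x ∈ U :=
  mem_cutSets.mp (mem_minCuts.mp (G.leastMinCut_mem_minCuts U)).1 x

end MinCuts

section Contraction

/-- The contraction of `G` along a map `f` that separates the terminals. Capacities inside a fiber
become loops, which no cut sees. -/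
noncomputable def contract (G : WeightedGraph κ) {W : Type} [Fintype W] (f : G.V → W)
    (hf : Function.Injective (f ∘ G.ι)) : WeightedGraph κ where
  V := W
  ι := ⟨f ∘ G.ι, hf⟩
  c y z := ∑ u with f u = y, ∑ v with f v = z, G.c u v
  symm y z := by
    rw [Finset.sum_comm]
    exact Finset.sum_congr rfl fun v _ => Finset.sum_congr rfl fun u _ => G.symm u v
  nonneg y z := Finset.sum_nonneg fun u _ => Finset.sum_nonneg fun v _ => G.nonneg u v

theorem isQuotient_contract (G : WeightedGraph κ) {W : Type} [Fintype W] {f : G.V → W}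
    (hf : Function.Injective (f ∘ G.ι)) (hsurj : Function.Surjective f) :
    IsQuotient G (G.contract f hf) f :=
  ⟨hsurj, fun _ => rfl, fun _ _ _ => rfl⟩

variable {G H : WeightedGraph κ} {f : G.V → H.V}

theorem IsQuotient.cutval_eq (hf : IsQuotient G H f) (B : Finset H.V) :
    H.cutval B = G.cutval (Finset.univ.filter (f · ∈ B)) := by
  have hcompl : (Finset.univ.filter (f · ∈ B))ᶜ = Finset.univ.filter (f · ∈ Bᶜ) := by
    simp only [Finset.mem_compl, Finset.compl_filter]
  calc H.cutval B
    _ = ∑ y ∈ B, ∑ z ∈ Bᶜ, ∑ u with f u = y, ∑ v with f v = z, G.c u v :=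
      Finset.sum_congr rfl fun y hy => Finset.sum_congr rfl fun z hz =>
        hf.2.2 y z (ne_of_mem_of_not_mem hy (Finset.mem_compl.mp hz))
    _ = ∑ y ∈ B, ∑ u with f u = y, ∑ z ∈ Bᶜ, ∑ v with f v = z, G.c u v :=
      Finset.sum_congr rfl fun y _ => Finset.sum_comm
    _ = ∑ y ∈ B, ∑ u with f u = y, ∑ v with f v ∈ Bᶜ, G.c u v :=
      Finset.sum_congr rfl fun y _ => Finset.sum_congr rfl fun u _ =>
        Finset.sum_fiberwise_eq_sum_filter _ _ f (G.c u)
    _ = ∑ u with f u ∈ B, ∑ v with f v ∈ Bᶜ, G.c u v := Finset.sum_fiberwise_eq_sum_filter _ _ f _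
    _ = G.cutval (Finset.univ.filter (f · ∈ B)) := by rw [cutval, hcompl]

theorem IsQuotient.mem_cutSets_iff (hf : IsQuotient G H f) {U : Finset κ} {B : Finset H.V} :
    B ∈ H.cutSets U ↔ Finset.univ.filter (f · ∈ B) ∈ G.cutSets U := by
  simp [mem_cutSets, hf.2.1]

theorem IsQuotient.isMimicking (hf : IsQuotient G H f)
    (hmin : ∀ U, ∃ A ∈ G.minCuts U, ∀ u v, f u = f v → (u ∈ A ↔ v ∈ A)) : IsMimicking G H := by
  intro U
  apply le_antisymm
  · obtain ⟨A, hA, hsat⟩ := hmin U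
    have hpreimage : Finset.univ.filter (f · ∈ A.image f) = A := by
      ext v
      simp only [Finset.mem_filter_univ, Finset.mem_image]
      exact ⟨fun ⟨u, hu, huv⟩ => (hsat u v huv).mp hu, fun hv => ⟨v, hv, rfl⟩⟩
    obtain ⟨hmem, hval⟩ := mem_minCuts.mp hA
    calc H.termCut U
      _ ≤ H.cutval (A.image f) := termCut_le_cutval (hf.mem_cutSets_iff.mpr (by rwa [hpreimage]))
      _ = G.termCut U := by rw [hf.cutval_eq, hpreimage, hval]
  · refine Finset.le_inf' _ _ fun B hB => ?_
    rw [hf.cutval_eq]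
    exact termCut_le_cutval (hf.mem_cutSets_iff.mp hB)

end Contraction

section Signature

variable {τ : Type} {e : τ ↪ κ} {G : WeightedGraph κ}

/-- The family of those sets of terminals, among the ones inside the range of `e`, whose least
minimum cut contains the vertex `v`. The range of `e` stands for the terminals other than a root. -/
noncomputable def signature (G : WeightedGraph κ) (e : τ ↪ κ) (v : G.V) : UpperSet (Finset τ) where
  carrier := {S | v ∈ G.leastMinCut (S.map e)}
  upper' _ _ hST hv := G.leastMinCut_mono (Finset.map_subset_map.mpr hST) hv

theorem mem_signature_iff {v : G.V} {S : Finset τ} :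
    S ∈ G.signature e v ↔ v ∈ G.leastMinCut (S.map e) :=
  Iff.rfl

theorem mem_signature_terminal_iff {x : κ} {S : Finset τ} :
    S ∈ G.signature e (G.ι x) ↔ x ∈ S.map e :=
  terminal_mem_leastMinCut_iff

theorem signature_comp_terminal_injective (he : (Set.range e)ᶜ.Subsingleton) :
    Function.Injective (G.signature e ∘ G.ι) := by
  have eq_of_mem_range {x y : κ} (hxy : G.signature e (G.ι x) = G.signature e (G.ι y))
      (hx : x ∈ Set.range e) : x = y := by
    obtain ⟨i, rfl⟩ := hx
    have hi : {i} ∈ G.signature e (G.ι y) := hxy ▸ mem_signature_terminal_iff.mpr (by simp)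
    simpa [eq_comm] using mem_signature_terminal_iff.mp hi
  intro x y hxy
  by_cases hx : x ∈ Set.range e
  · exact eq_of_mem_range hxy hx
  by_cases hy : y ∈ Set.range e
  · exact (eq_of_mem_range hxy.symm hy).symm
  · exact he hx hy

theorem exists_map_eq_or_map_eq_compl [Fintype κ] (he : (Set.range e)ᶜ.Subsingleton)
    (U : Finset κ) : ∃ S : Finset τ, S.map e = U ∨ S.map e = Uᶜ := by
  have exists_map_eq {W : Finset κ} (hW : (W : Set κ) ⊆ Set.range e) :
      ∃ S : Finset τ, S.map e = W := by
    rw [← Set.image_univ, Finset.subset_set_image_iff] at hW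
    obtain ⟨S, -, hS⟩ := hW
    exact ⟨S, by rw [Finset.map_eq_image, hS]⟩
  by_cases hU : (U : Set κ) ⊆ Set.range e
  · exact (exists_map_eq hU).imp fun _ => Or.inl
  · obtain ⟨r, hrU, hr⟩ := Set.not_subset.mp hU
    refine (exists_map_eq fun x hx => ?_).imp fun _ => Or.inr
    by_contra hxe
    exact Finset.mem_compl.mp hx (he hxe hr ▸ hrU)

theorem exists_mem_minCuts_forall_signature_eq (he : (Set.range e)ᶜ.Subsingleton)
    (G : WeightedGraph κ) (U : Finset κ) :
    ∃ A ∈ G.minCuts U, ∀ u v, G.signature e u = G.signature e v → (u ∈ A ↔ v ∈ A) := by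
  have := G.finite_terminals
  have := Fintype.ofFinite κ
  obtain ⟨S, hS⟩ := exists_map_eq_or_map_eq_compl he U
  have hmin := G.leastMinCut_mem_minCuts (S.map e)
  have hsat (u v) (huv : G.signature e u = G.signature e v) :
      u ∈ G.leastMinCut (S.map e) ↔ v ∈ G.leastMinCut (S.map e) := by
    rw [← mem_signature_iff, ← mem_signature_iff, huv]
  rcases hS with rfl | hS
  · exact ⟨_, hmin, hsat⟩
  · refine ⟨(G.leastMinCut (S.map e))ᶜ, ?_, fun u v huv => ?_⟩
    · simpa only [hS, compl_compl] using compl_mem_minCuts_compl hmin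
    · simpa only [Finset.mem_compl, not_iff_not] using hsat u v huv

theorem exists_isQuotient_isMimicking_card_le_card_upperSet (he : (Set.range e)ᶜ.Subsingleton)
    (G : WeightedGraph κ) :
    ∃ (H : WeightedGraph κ) (f : G.V → H.V), IsQuotient G H f ∧ IsMimicking G H ∧
      Fintype.card H.V ≤ Nat.card (UpperSet (Finset τ)) := by
  have := G.finite_terminals
  have := Finite.of_injective e e.injective
  let f := Set.rangeFactorization (G.signature e)
  have hf : Function.Injective (f ∘ G.ι) :=
    Function.Injective.of_comp (f := Subtype.val) (signature_comp_terminal_injective he)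
  have hquot := G.isQuotient_contract hf Set.rangeFactorization_surjective
  refine ⟨G.contract f hf, f, hquot, hquot.isMimicking fun U => ?_, ?_⟩
  · obtain ⟨A, hA, hsat⟩ := exists_mem_minCuts_forall_signature_eq he G U
    exact ⟨A, hA, fun u v huv => hsat u v (congrArg Subtype.val huv)⟩
  · exact Fintype.card_eq_nat_card.trans_le (Finite.card_subtype_le _)

end Signature

end WeightedGraph

theorem exists_embedding_fin_compl_range_subsingleton (κ : Type*) [Finite κ] :
    ∃ e : Fin (Nat.card κ - 1) ↪ κ, (Set.range e)ᶜ.Subsingleton := by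
  let equiv := Finite.equivFin κ
  let e := (Fin.castLEEmb ((Nat.card κ).sub_le 1)).trans equiv.symm.toEmbedding
  have le_of_notMem_range {x : κ} (hx : x ∉ Set.range e) : Nat.card κ - 1 ≤ equiv x := by
    by_contra! hlt
    exact hx ⟨⟨equiv x, hlt⟩, equiv.symm_apply_apply x⟩
  refine ⟨e, fun x hx y hy => equiv.injective (Fin.ext ?_)⟩
  have := le_of_notMem_range hx
  have := le_of_notMem_range hy
  lia

open WeightedGraph in
theorem mimicking_network_upper_bound_general {κ : Type} (G : WeightedGraph κ) :
    ∃ (H : WeightedGraph κ) (f : G.V → H.V), IsQuotient G H f ∧ IsMimicking G H ∧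
      Fintype.card H.V ≤ dedekind (Nat.card κ - 1) := by
  have := G.finite_terminals
  obtain ⟨e, he⟩ := exists_embedding_fin_compl_range_subsingleton κ
  rw [← card_upperSet_finset_fin]
  exact exists_isQuotient_isMimicking_card_le_card_upperSet he G

/-- every weighted graph with `k` terminals has a mimicking network with at
most `M(k-1)` (the `(k-1)`-st Dedekind number) vertices. -/
theorem mimicking_network_upper_bound (k : ℕ) (G : WeightedGraph (Fin k)) :
    ∃ H : WeightedGraph (Fin k), WeightedGraph.IsMimicking G H ∧
      Fintype.card H.V ≤ dedekind (k - 1) := by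
  obtain ⟨H, _, -, hmimicking, hcard⟩ := mimicking_network_upper_bound_general G
  exact ⟨H, hmimicking, by rwa [Nat.card_fin] at hcard⟩
end

section
/- Let G be a weighted graph with terminal set K such that for every U ⊆ K the minimum terminal cut is unique, i.e. there is exactly one A ⊆ V with A ∩ K = U and h_G(A) = h_K^G(U). Let H be the contraction-based mimicking network obtained by contracting each class of the equivalence u ~ v ⟺ (u and v lie on the same side of every minimum terminal cut of G). Then H has the minimum number of vertices among all contraction-based mimicking networks for (G,K). -/
open scoped Classical

/-!
The preimage of a vertex set under a contraction has the same cut value and the same terminals, so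
the minimum terminal cuts of a contraction-based mimicking network `H'` pull back to minimum
terminal cuts of `G`. When these are unique, every minimum terminal cut of `G` is such a pullback
and therefore does not separate vertices that `H'` identifies. Hence the contraction onto `H'`
refines the min-cut equivalence, and `H'` has at least as many vertices as there are classes.
-/

theorem card_le_card_of_factorsThrough {α β γ : Type*} [Fintype β] [Fintype γ]
    {g : α → γ} {f : α → β} (hg : Function.Surjective g) (h : g.FactorsThrough f) :
    Fintype.card γ ≤ Fintype.card β := by
  have hinj : Function.Injective (f ∘ Function.surjInv hg) := fun z w hzw ↦ by
    simpa only [Function.surjInv_eq] using h hzw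
  exact Fintype.card_le_of_injective _ hinj

namespace WeightedGraph

variable {κ : Type} {G H : WeightedGraph κ}

/-- `A` is a minimum terminal cut of `G` for the terminal side `U`, i.e. `A ∩ K = U` and
`h_G(A) = h_K^G(U)`. -/
def IsMinCut (G : WeightedGraph κ) (U : Finset κ) (A : Finset G.V) : Prop :=
  (∀ x : κ, G.ι x ∈ A ↔ x ∈ U) ∧ G.cutval A = G.termCut U

/-- The equivalence `x ~ y` whose classes are contracted in the optimal network: `x` and `y` lie on
the same side of every minimum terminal cut of `G`. -/
def MinCutEquiv (G : WeightedGraph κ) (x y : G.V) : Prop :=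
  ∀ (U : Finset κ) (A : Finset G.V), G.IsMinCut U A → (x ∈ A ↔ y ∈ A)

theorem exists_isMinCut (G : WeightedGraph κ) (U : Finset κ) : ∃ A, G.IsMinCut U A := by
  obtain ⟨A, hA, hcut⟩ := Finset.exists_mem_eq_inf' (G.cutSets_nonempty U) G.cutval
  exact ⟨A, (Finset.mem_filter.mp hA).2, hcut.symm⟩

theorem IsQuotient.cutval_preimage {f : G.V → H.V} (hf : IsQuotient G H f) (B : Finset H.V) :
    G.cutval {u | f u ∈ B} = H.cutval B := by
  have hcompl : (Finset.univ.filter (f · ∈ B))ᶜ = Finset.univ.filter (f · ∈ Bᶜ) := by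
    simp only [Finset.compl_filter, Finset.mem_compl]
  have hc {y z : H.V} (hy : y ∈ B) (hz : z ∈ Bᶜ) :
      H.c y z = ∑ u with f u = y, ∑ v with f v = z, G.c u v :=
    hf.2.2 y z fun hyz ↦ Finset.mem_compl.mp hz (hyz ▸ hy)
  calc G.cutval {u | f u ∈ B}
      = ∑ u with f u ∈ B, ∑ v with f v ∈ Bᶜ, G.c u v := by rw [cutval, hcompl]
    _ = ∑ y ∈ B, ∑ u with f u = y, ∑ z ∈ Bᶜ, ∑ v with f v = z, G.c u v := by
        simp_rw [← Finset.sum_fiberwise_eq_sum_filter]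
    _ = ∑ y ∈ B, ∑ z ∈ Bᶜ, ∑ u with f u = y, ∑ v with f v = z, G.c u v :=
        Finset.sum_congr rfl fun _ _ ↦ Finset.sum_comm
    _ = H.cutval B :=
        Finset.sum_congr rfl fun _ hy ↦ Finset.sum_congr rfl fun _ hz ↦ (hc hy hz).symm

theorem IsMinCut.preimage {f : G.V → H.V} {U : Finset κ} {B : Finset H.V} (hB : H.IsMinCut U B)
    (hf : IsQuotient G H f) (hU : H.termCut U = G.termCut U) :
    G.IsMinCut U {u | f u ∈ B} := by
  refine ⟨fun x ↦ ?_, ?_⟩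
  · rw [Finset.mem_filter_univ, hf.2.1 x]
    exact hB.1 x
  · rw [hf.cutval_preimage, hB.2, hU]

theorem IsQuotient.minCutEquiv_of_map_eq {f : G.V → H.V} (hf : IsQuotient G H f)
    (hm : IsMimicking G H) (huniq : ∀ U, {A | G.IsMinCut U A}.Subsingleton) {x y : G.V}
    (hxy : f x = f y) : G.MinCutEquiv x y := by
  intro U A hA
  obtain ⟨B, hB⟩ := H.exists_isMinCut U
  have hAB : A = ({u | f u ∈ B} : Finset G.V) := huniq U hA (hB.preimage hf (hm U))
  simp only [hAB, Finset.mem_filter_univ, hxy]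

end WeightedGraph

open WeightedGraph in
theorem contraction_mimicking_optimal_general {κ : Type} {G H' : WeightedGraph κ}
    (huniq : ∀ U, {A | G.IsMinCut U A}.Subsingleton) {W : Type*} [Fintype W] {f : G.V → W}
    (hsurj : Function.Surjective f) (hf : ∀ x y, G.MinCutEquiv x y → f x = f y) {f' : G.V → H'.V}
    (hq' : IsQuotient G H' f') (hm' : IsMimicking G H') :
    Fintype.card W ≤ Fintype.card H'.V :=
  card_le_card_of_factorsThrough hsurj fun x y hxy ↦
    hf x y (hq'.minCutEquiv_of_map_eq hm' huniq hxy)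

/-- if `G` has unique minimum terminal cuts, then the contraction-based
network `H` obtained by contracting the classes of the equivalence "`x` and `y` lie on
the same side of every minimum terminal cut of `G`" has the minimum number of vertices
among all contraction-based mimicking networks for `(G, K)`. -/
theorem contraction_mimicking_optimal {κ : Type} (G H : WeightedGraph κ)
    (huniq : ∀ U : Finset κ, ∃! A : Finset G.V,
      (∀ x : κ, G.ι x ∈ A ↔ x ∈ U) ∧ G.cutval A = G.termCut U)
    (f : G.V → H.V) (hq : WeightedGraph.IsQuotient G H f)
    (hf : ∀ x y : G.V, f x = f y ↔
      ∀ (U : Finset κ) (A : Finset G.V),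
        (∀ z : κ, G.ι z ∈ A ↔ z ∈ U) → G.cutval A = G.termCut U → (x ∈ A ↔ y ∈ A))
    (H' : WeightedGraph κ) (f' : G.V → H'.V)
    (hq' : WeightedGraph.IsQuotient G H' f')
    (hm' : WeightedGraph.IsMimicking G H') :
    Fintype.card H.V ≤ Fintype.card H'.V :=
  contraction_mimicking_optimal_general (fun U _ hA _ hB ↦ (huniq U).unique hA hB) hq.1
    (fun x y hxy ↦ (hf x y).2 fun U A hA hcut ↦ hxy U A ⟨hA, hcut⟩) hq' hm'
end

section
/- Fix a finite terminal set K of size k ≥ 2, a terminal v_k ∈ K, and a nonempty subset U ⊆ K with v_k ∉ U. Then there exist two weighted graphs G_1 and G_2 with terminal set K whose minimum terminal cut vectors differ only in the coordinate indexed by U: h_K^{G_1}(U) ≠ h_K^{G_2}(U), while h_K^{G_1}(W) = h_K^{G_2}(W) for every nonempty W ⊆ K with v_k ∉ W and W ≠ U. -/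
open scoped Classical

/-!
Join the terminals of `U` to one new vertex, the remaining terminals to a second one, and these two
hubs to each other by an edge of capacity `e`. A cut with terminal side `W` either keeps the hubs
together, at cost `w(W)` or `w(K \ W)`, or separates them, at cost `w(W ∆ U) + e` or
`w(W ∆ (K \ U)) + e`. If `w(U) = w(K \ U) = N`, the cheaper of the first two cuts costs at most
`N`, while a separating cut costs at least `e` plus the smallest weight, unless `W` is `U` or its
complement, when it can cost just `e`. With all weights at least `1`, lowering `e` from `N` to
`N - 1` therefore changes no minimum terminal cut but the one indexed by `U`.
-/

open Finset
open scoped symmDiff NNReal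

-- The last decidability instance is unified instead of synthesized, so that the formula matches
-- the classical one in `WeightedGraph.cutval`.
theorem sum_sum_compl_disjSum {α β M : Type*} [Fintype α] [Fintype β] [DecidableEq α]
    [DecidableEq β] {_ : DecidableEq (α ⊕ β)} [AddCommMonoid M] (f : α ⊕ β → α ⊕ β → M)
    (s : Finset α) (t : Finset β) :
    ∑ u ∈ s.disjSum t, ∑ v ∈ (s.disjSum t)ᶜ, f u v =
      ∑ x ∈ s, (∑ y ∈ sᶜ, f (.inl x) (.inl y) + ∑ j ∈ tᶜ, f (.inl x) (.inr j)) +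
        ∑ i ∈ t, (∑ y ∈ sᶜ, f (.inr i) (.inl y) + ∑ j ∈ tᶜ, f (.inr i) (.inr j)) := by
  have compl_disjSum : (s.disjSum t)ᶜ = sᶜ.disjSum tᶜ := by
    ext (x | i) <;> simp
  simp only [compl_disjSum, sum_disjSum]

theorem exists_balanced_weight {α : Type*} [Fintype α] [DecidableEq α] {U : Finset α}
    (hU : U.Nonempty) (hUc : Uᶜ.Nonempty) :
    ∃ w : α → ℝ≥0, (∀ x, 1 ≤ w x) ∧ ∑ x ∈ U, w x = ∑ x ∈ Uᶜ, w x := by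
  refine ⟨fun x => if x ∈ U then #Uᶜ else #U, fun x => ?_, ?_⟩
  · dsimp only
    split_ifs
    · exact Nat.one_le_cast.2 hUc.card_pos
    · exact Nat.one_le_cast.2 hU.card_pos
  · calc ∑ x ∈ U, (if x ∈ U then (#Uᶜ : ℝ≥0) else #U)
        = #U * #Uᶜ := by
          rw [sum_congr rfl fun x hx => if_pos hx, sum_const, nsmul_eq_mul]
      _ = ∑ x ∈ Uᶜ, if x ∈ U then (#Uᶜ : ℝ≥0) else #U := by
          rw [sum_congr rfl fun x hx => if_neg (mem_compl.1 hx), sum_const, nsmul_eq_mul, mul_comm]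

theorem forall_finset_bool {p : Finset Bool → Prop} :
    (∀ S, p S) ↔ p ∅ ∧ p univ ∧ p {true} ∧ p {false} := by
  have hcases : ∀ S : Finset Bool, S = ∅ ∨ S = univ ∨ S = {true} ∨ S = {false} := by decide
  refine ⟨fun h => ⟨h _, h _, h _, h _⟩, ?_⟩
  rintro ⟨h₀, h₁, ht, hf⟩ S
  rcases hcases S with rfl | rfl | rfl | rfl <;> assumption

namespace WeightedGraph

theorem le_termCut_iff {κ : Type} {G : WeightedGraph κ} {W : Finset κ} {z : ℝ} :
    z ≤ G.termCut W ↔ ∀ A : Finset G.V, (∀ x, G.ι x ∈ A ↔ x ∈ W) → z ≤ G.cutval A := by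
  simp only [termCut, le_inf'_iff, cutSets, mem_filter, mem_univ, true_and]

variable {κ : Type} [Fintype κ]

/-- The graph obtained from the terminals by adding two hubs `true` and `false`: the terminals in
`U` are joined to `true` and the others to `false`, each with capacity `w x`, and the two hubs are
joined with capacity `e`. Capacities are `ℝ≥0`-valued so that nonnegativity is built in. -/
noncomputable def dumbbell (U : Finset κ) (w : κ → ℝ≥0) (e : ℝ≥0) : WeightedGraph κ where
  V := κ ⊕ Bool
  ι := .inl
  c
    | .inl _, .inl _ => 0
    | .inl x, .inr i | .inr i, .inl x => if decide (x ∈ U) = i then w x else 0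
    | .inr i, .inr j => if i = j then 0 else e
  symm := by
    rintro (x | i) (y | j) <;> simp only [eq_comm]
  nonneg := by
    rintro (x | i) (y | j) <;> positivity

variable (U : Finset κ) (w : κ → ℝ≥0) (e : ℝ≥0)

theorem cutval_dumbbell (W : Finset κ) (S : Finset Bool) :
    (dumbbell U w e).cutval (W.disjSum S) =
      ↑(∑ x ∈ W ∆ ({x | decide (x ∈ U) ∈ S} : Finset κ), w x + #S * #Sᶜ * e) := by
  set H : Finset κ := {x | decide (x ∈ U) ∈ S} with H_def
  have terminal_to_hub : ∑ x ∈ W, ∑ i ∈ Sᶜ, (if decide (x ∈ U) = i then (w x : ℝ) else 0) =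
      ∑ x ∈ W \ H, (w x : ℝ) := by
    simp only [sum_ite_eq, ← sum_filter]
    congr 1
    ext x
    simp [H_def]
  have hub_to_terminal : ∑ x ∈ Wᶜ, ∑ i ∈ S, (if decide (x ∈ U) = i then (w x : ℝ) else 0) =
      ∑ x ∈ H \ W, (w x : ℝ) := by
    simp only [sum_ite_eq, ← sum_filter]
    congr 1
    ext x
    simp [H_def, and_comm]
  have hub_to_hub : ∑ i ∈ S, ∑ j ∈ Sᶜ, (if i = j then 0 else (e : ℝ)) = #S * #Sᶜ * e := by
    calc ∑ i ∈ S, ∑ j ∈ Sᶜ, (if i = j then 0 else (e : ℝ))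
        = ∑ _ ∈ S, ∑ _ ∈ Sᶜ, (e : ℝ) :=
          sum_congr rfl fun i hi => sum_congr rfl fun j hj =>
            if_neg fun h : i = j => mem_compl.1 hj (h ▸ hi)
      _ = #S * #Sᶜ * e := by simp only [sum_const, nsmul_eq_mul, mul_assoc]
  refine (sum_sum_compl_disjSum (dumbbell U w e).c W S).trans ?_
  simp only [dumbbell, sum_add_distrib, sum_const_zero, zero_add]
  rw [sum_comm (s := S), terminal_to_hub, hub_to_terminal, hub_to_hub, symmDiff_def, sup_eq_union,
    sum_union disjoint_sdiff_sdiff, ← add_assoc]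
  norm_cast

theorem le_termCut_dumbbell_iff {W : Finset κ} {z : ℝ} :
    z ≤ (dumbbell U w e).termCut W ↔
      ∀ S : Finset Bool, z ≤ (dumbbell U w e).cutval (W.disjSum S) := by
  rw [le_termCut_iff]
  refine ⟨fun h S => h _ fun x => inl_mem_disjSum, fun h A hA => ?_⟩
  obtain rfl : toLeft A = W := by ext x; exact mem_toLeft.trans (hA x)
  rw [← toLeft_disjSum_toRight (u := A)]
  exact h _

theorem termCut_dumbbell (W : Finset κ) :
    (dumbbell U w e).termCut W =
      ↑(min (min (∑ x ∈ W, w x) (∑ x ∈ Wᶜ, w x))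
        (min (∑ x ∈ W ∆ U, w x) (∑ x ∈ W ∆ Uᶜ, w x) + e)) := by
  refine eq_of_forall_le_iff fun z => ?_
  have hub_none : ({x | decide (x ∈ U) ∈ (∅ : Finset Bool)} : Finset κ) = ∅ := by simp
  have hub_all : ({x | decide (x ∈ U) ∈ (univ : Finset Bool)} : Finset κ) = univ :=
    filter_true_of_mem fun _ _ => mem_univ _
  have hub_true : ({x | decide (x ∈ U) ∈ ({true} : Finset Bool)} : Finset κ) = U := by simp
  have hub_false : ({x | decide (x ∈ U) ∈ ({false} : Finset Bool)} : Finset κ) = Uᶜ := by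
    ext; simp
  have card_compl_singleton (i : Bool) : #({i}ᶜ : Finset Bool) = 1 := by
    rw [card_compl, Fintype.card_bool, card_singleton]
  have symmDiff_empty : W ∆ ∅ = W := symmDiff_bot W
  have symmDiff_univ : W ∆ univ = Wᶜ := symmDiff_top W
  rw [le_termCut_dumbbell_iff, forall_finset_bool]
  simp only [cutval_dumbbell, hub_none, hub_all, hub_true, hub_false, symmDiff_empty,
    symmDiff_univ, compl_univ, card_empty, card_singleton, card_compl_singleton, Nat.cast_zero,
    Nat.cast_one, zero_mul, mul_zero, add_zero, one_mul, ← min_add_add_right, NNReal.coe_min,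
    le_min_iff, and_assoc]

variable {U w e}

theorem termCut_dumbbell_self (hbal : ∑ x ∈ U, w x = ∑ x ∈ Uᶜ, w x) :
    (dumbbell U w e).termCut U = ↑(min (∑ x ∈ U, w x) e) := by
  rw [termCut_dumbbell, ← hbal, min_self, symmDiff_self, bot_eq_empty, sum_empty,
    min_eq_left zero_le, zero_add]

theorem termCut_dumbbell_of_ne {W : Finset κ} (hbal : ∑ x ∈ U, w x = ∑ x ∈ Uᶜ, w x)
    (he : ∀ x, ∑ x ∈ U, w x ≤ w x + e) (hU : W ≠ U) (hUc : W ≠ Uᶜ) :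
    (dumbbell U w e).termCut W = ↑(min (∑ x ∈ W, w x) (∑ x ∈ Wᶜ, w x)) := by
  have le_separating {D : Finset κ} (hD : D.Nonempty) : ∑ x ∈ U, w x ≤ ∑ x ∈ D, w x + e := by
    obtain ⟨x, hx⟩ := hD
    calc ∑ x ∈ U, w x ≤ w x + e := he x
      _ ≤ ∑ x ∈ D, w x + e := by gcongr; exact single_le_sum_of_canonicallyOrdered hx
  have together_le : min (∑ x ∈ W, w x) (∑ x ∈ Wᶜ, w x) ≤ ∑ x ∈ U, w x := by
    by_contra! h
    obtain ⟨h₁, h₂⟩ := lt_min_iff.1 h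
    refine (add_lt_add h₁ h₂).ne ?_
    rw [sum_add_sum_compl, ← sum_add_sum_compl U, ← hbal]
  rw [termCut_dumbbell, ← min_add_add_right, min_eq_left]
  exact together_le.trans <|
    le_min (le_separating (symmDiff_nonempty.2 hU)) (le_separating (symmDiff_nonempty.2 hUc))

end WeightedGraph

open WeightedGraph in
/-- for any fixed terminal `t = v_k` and nonempty `U ⊆ K` with `t ∉ U`,
there are two weighted graphs whose minimum terminal cut vectors differ exactly in the
coordinate indexed by `U`. -/
theorem mtcv_vary_single_coordinate (κ : Type) [Fintype κ] (t : κ)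
    (hk : 2 ≤ Fintype.card κ) (U : Finset κ) (hU : U.Nonempty) (htU : t ∉ U) :
    ∃ G₁ G₂ : WeightedGraph κ,
      G₁.termCut U ≠ G₂.termCut U ∧
      ∀ W : Finset κ, W.Nonempty → t ∉ W → W ≠ U →
        G₁.termCut W = G₂.termCut W := by
  have ht : t ∈ Uᶜ := mem_compl.2 htU
  obtain ⟨w, one_le, hbal⟩ := exists_balanced_weight hU ⟨t, ht⟩
  set N := ∑ x ∈ U, w x
  have hN : 0 < N := sum_pos (fun x _ => zero_lt_one.trans_le (one_le x)) hU
  refine ⟨dumbbell U w N, dumbbell U w (N - 1), ?_, fun W _ htW hWU => ?_⟩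
  · rw [termCut_dumbbell_self hbal, termCut_dumbbell_self hbal, min_self,
      min_eq_right tsub_le_self]
    exact NNReal.coe_injective.ne (tsub_lt_self hN zero_lt_one).ne'
  · have hWUc : W ≠ Uᶜ := fun h => htW (h ▸ ht)
    have hpred (x : κ) : N ≤ w x + (N - 1) :=
      le_add_tsub.trans (by gcongr; exact one_le x)
    rw [termCut_dumbbell_of_ne hbal (fun _ => le_add_self) hWU hWUc,
      termCut_dumbbell_of_ne hbal hpred hWU hWUc]
end

section
/- For every k ≥ 2 there exists a weighted graph G with a terminal set K of size k such that every mimicking network for (G,K) has at least 2^{(k−1)/2} vertices. -/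
open scoped Classical

/-!
A terminal cut value of `H` is a sum of edge capacities of `H`, so the terminal cut values of `H`
span a `ℚ`-vector space of dimension at most the number of pairs of vertices. It therefore suffices
to find `G` with `k` terminals and `2 ^ (k - 1) - 1` rationally independent terminal cut values, one
for each nontrivial bipartition of the terminals. Fix a terminal `r` and give `G` one nonterminal
vertex for each nonempty set `S` of terminals avoiding `r`, with an edge of capacity `2` to each
element of `S` and an edge of capacity `2 |S| - 1` to `r`, all multiplied by a positive real `w S`.
The cut value of `U ∌ r` is `∑ S, w S * (2 |S ∩ U| - [S ⊆ U])`. Taking the `w S` rationally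
independent reduces the claim to the nonsingularity of a rational matrix, where the modular part
`2 |S ∩ U|` can be cleared with the columns of the singletons and what remains is triangular for
inclusion.
-/

theorem eq_zero_of_forall_sum_filter_le_eq_zero {α M : Type*} [PartialOrder α] [DecidableLE α]
    [Fintype α] [AddCommMonoid M] {f : α → M} (hf : ∀ a, ∑ b with a ≤ b, f b = 0) (a : α) :
    f a = 0 := by
  induction a using WellFoundedGT.induction with
  | ind a ih =>
    rw [← hf a]
    refine (Finset.sum_eq_single_of_mem a (by simp) fun b hb hba ↦ ?_).symm
    exact ih b (lt_of_le_of_ne (Finset.mem_filter.1 hb).2 hba.symm)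

theorem exists_pos_linearIndependent_rat_real (ι : Type*) [Finite ι] :
    ∃ w : ι → ℝ, (∀ i, 0 < w i) ∧ LinearIndependent ℚ w := by
  obtain ⟨n, ⟨e⟩⟩ := Finite.exists_equiv_fin ι
  have hn : (n : Cardinal) ≤ Module.rank ℚ ℝ := by
    rw [Real.rank_rat_real]
    exact Cardinal.natCast_le_aleph0.trans Cardinal.aleph0_le_continuum
  obtain ⟨v, hv⟩ := exists_linearIndependent_of_le_rank hn
  refine ⟨fun i ↦ |v (e i)|, fun i ↦ abs_pos.2 (hv.ne_zero _), ?_⟩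
  convert (hv.comp e e.injective).units_smul fun i ↦ if 0 ≤ v (e i) then 1 else -1 with i
  rcases le_or_gt 0 (v (e i)) with h | h
  · simp [h, abs_of_nonneg]
  · simp [h.not_ge, abs_of_neg h]

theorem sum_mul_card_inter {ι α R : Type*} [Fintype ι] [NonAssocSemiring R] (x : ι → R)
    (S : Finset α) (T : ι → Finset α) :
    ∑ j, x j * (S ∩ T j).card = ∑ i ∈ S, ∑ j with i ∈ T j, x j := by
  simp only [Finset.sum_filter]
  rw [Finset.sum_comm]
  refine Finset.sum_congr rfl fun j _ ↦ ?_
  rw [← Finset.sum_filter, Finset.filter_mem_eq_inter, Finset.sum_const, nsmul_eq_mul,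
    Nat.cast_comm]

namespace WeightedGraph

variable {κ : Type}

section Rank

/-- The capacity function on unordered pairs of vertices, which counts each edge only once. -/
def edgeCapacity (G : WeightedGraph κ) : Sym2 G.V → ℝ :=
  Sym2.lift ⟨G.c, G.symm⟩

theorem cutval_mem_span_edgeCapacity (G : WeightedGraph κ) (A : Finset G.V) :
    G.cutval A ∈ Submodule.span ℚ
      (Set.range fun e : {e : Sym2 G.V // ¬e.IsDiag} ↦ G.edgeCapacity e) := by
  refine Submodule.sum_mem _ fun u hu ↦ Submodule.sum_mem _ fun v hv ↦ Submodule.subset_span ?_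
  have huv : u ≠ v := fun h ↦ Finset.mem_compl.1 hv (h ▸ hu)
  exact ⟨⟨s(u, v), huv⟩, rfl⟩

theorem termCut_mem_span_edgeCapacity (G : WeightedGraph κ) (U : Finset κ) :
    G.termCut U ∈ Submodule.span ℚ
      (Set.range fun e : {e : Sym2 G.V // ¬e.IsDiag} ↦ G.edgeCapacity e) := by
  obtain ⟨A, -, hA⟩ := Finset.exists_mem_eq_inf' (G.cutSets_nonempty U) G.cutval
  rw [termCut, hA]
  exact G.cutval_mem_span_edgeCapacity A

theorem card_le_choose_two_of_linearIndependent_termCut (G : WeightedGraph κ) {ι : Type*}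
    [Fintype ι] {U : ι → Finset κ} (hU : LinearIndependent ℚ fun i ↦ G.termCut (U i)) :
    Fintype.card ι ≤ (Fintype.card G.V).choose 2 := by
  let capacity (e : {e : Sym2 G.V // ¬e.IsDiag}) : ℝ := G.edgeCapacity e
  have hle : Submodule.span ℚ (Set.range fun i ↦ G.termCut (U i)) ≤
      Submodule.span ℚ (Set.range capacity) :=
    Submodule.span_le.2 <| Set.range_subset_iff.2 fun i ↦ G.termCut_mem_span_edgeCapacity (U i)
  have : FiniteDimensional ℚ (Submodule.span ℚ (Set.range capacity)) :=
    FiniteDimensional.span_of_finite ℚ (Set.finite_range capacity)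
  calc Fintype.card ι
      = Module.finrank ℚ (Submodule.span ℚ (Set.range fun i ↦ G.termCut (U i))) :=
        (finrank_span_eq_card hU).symm
    _ ≤ Module.finrank ℚ (Submodule.span ℚ (Set.range capacity)) := Submodule.finrank_mono hle
    _ ≤ Fintype.card {e : Sym2 G.V // ¬e.IsDiag} := finrank_range_le_card capacity
    _ = (Fintype.card G.V).choose 2 := Sym2.card_subtype_not_diag

end Rank

section Bipartite

variable [Fintype κ] {σ : Type} [Fintype σ]

/-- The complete bipartite weighted graph between the terminals `κ` and nonterminal vertices `σ`,
where the edge joining `i` to `s` has capacity `a i s`. -/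
abbrev bipartite (a : κ → σ → ℝ) (ha : ∀ i s, 0 ≤ a i s) : WeightedGraph κ where
  V := κ ⊕ σ
  ι := Function.Embedding.inl
  c
    | .inl i, .inr s => a i s
    | .inr s, .inl i => a i s
    | .inl _, .inl _ => 0
    | .inr _, .inr _ => 0
  symm := by rintro (i | s) (j | t) <;> rfl
  nonneg := by rintro (i | s) (j | t) <;> first | exact ha _ _ | exact le_rfl

variable {a : κ → σ → ℝ} {ha : ∀ i s, 0 ≤ a i s}

theorem mem_cutSets_bipartite {U : Finset κ} {A : Finset (κ ⊕ σ)} :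
    A ∈ (bipartite a ha).cutSets U ↔ A.toLeft = U := by
  simp [cutSets, Finset.ext_iff]

theorem cutval_bipartite (A : Finset (κ ⊕ σ)) :
    (bipartite a ha).cutval A =
      ∑ s, if .inr s ∈ A then ∑ i ∈ A.toLeftᶜ, a i s else ∑ i ∈ A.toLeft, a i s := by
  calc (bipartite a ha).cutval A
      = ∑ x ∈ A, ∑ y ∈ A.toLeftᶜ.disjSum A.toRightᶜ, (bipartite a ha).c x y := by
        refine Finset.sum_congr rfl fun x _ ↦ Finset.sum_congr ?_ fun _ _ ↦ rfl
        ext (i | s) <;> simp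
    _ = ∑ i ∈ A.toLeft, ∑ s ∈ A.toRightᶜ, a i s + ∑ s ∈ A.toRight, ∑ i ∈ A.toLeftᶜ, a i s := by
        simp [Finset.sum_sum_eq_sum_toLeft_add_sum_toRight]
    _ = ∑ s, if .inr s ∈ A then ∑ i ∈ A.toLeftᶜ, a i s else ∑ i ∈ A.toLeft, a i s := by
        rw [Finset.sum_comm, add_comm, Finset.sum_ite]
        congr 2 <;> ext <;> simp

theorem termCut_bipartite (U : Finset κ) :
    (bipartite a ha).termCut U = ∑ s, min (∑ i ∈ U, a i s) (∑ i ∈ Uᶜ, a i s) := by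
  apply le_antisymm
  · let T : Finset σ := {s | ∑ i ∈ Uᶜ, a i s ≤ ∑ i ∈ U, a i s}
    refine (Finset.inf'_le _ (mem_cutSets_bipartite.2 (Finset.toLeft_disjSum (t := T)))).trans_eq ?_
    rw [cutval_bipartite]
    refine Finset.sum_congr rfl fun s _ ↦ ?_
    simp [T, min_comm (∑ i ∈ U, a i s), min_def]
  · refine Finset.le_inf' _ _ fun A hA ↦ ?_
    rw [cutval_bipartite, mem_cutSets_bipartite.1 hA]
    gcongr with s
    split_ifs
    exacts [min_le_right _ _, min_le_left _ _]

theorem linearIndependent_termCut_bipartite {w : σ → ℝ} (hw : ∀ s, 0 ≤ w s)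
    (hli : LinearIndependent ℚ w) {q : κ → σ → ℚ} (hq : ∀ i s, 0 ≤ q i s) {ι : Type*}
    {U : ι → Finset κ}
    (hU : LinearIndependent ℚ fun j s ↦ min (∑ i ∈ U j, q i s) (∑ i ∈ (U j)ᶜ, q i s)) :
    LinearIndependent ℚ fun j ↦
      (bipartite (fun i s ↦ w s * q i s)
        fun i s ↦ mul_nonneg (hw s) (Rat.cast_nonneg.2 (hq i s))).termCut (U j) := by
  convert hU.map_injOn (Fintype.linearCombination ℚ w)
    hli.fintypeLinearCombination_injective.injOn with j
  rw [termCut_bipartite, Function.comp_apply, Fintype.linearCombination_apply]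
  refine Finset.sum_congr rfl fun s _ ↦ ?_
  rw [← Finset.mul_sum, ← Finset.mul_sum, ← mul_min_of_nonneg _ _ (hw s), Rat.smul_def,
    Rat.cast_min, Rat.cast_sum, Rat.cast_sum, mul_comm]

end Bipartite

section Sides

/-- The nonempty sets of terminals avoiding the terminal `r`. Each nontrivial bipartition of the
terminals has exactly one part of this kind. -/
abbrev Side (r : κ) : Type := {S : Finset κ // S.Nonempty ∧ r ∉ S}

variable {r : κ}

theorem card_side_add_one [Fintype κ] (r : κ) :
    Fintype.card (Side r) + 1 = 2 ^ (Fintype.card κ - 1) := by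
  have hside : Fintype.card (Side r) = (({r}ᶜ : Finset κ).powerset.erase ∅).card :=
    Fintype.card_of_subtype _ fun S ↦ by simp [Finset.nonempty_iff_ne_empty]
  rw [hside, Finset.card_erase_add_one (Finset.empty_mem_powerset _), Finset.card_powerset,
    Finset.card_compl, Finset.card_singleton]

/-- The capacity, before scaling by `w S`, of the edge joining the terminal `i` to the nonterminal
vertex attached to the side `S`. The edge to `r` is slightly lighter than the total `2 |S|` of the
edges to `S`, so in a minimum cut the vertex leaves `r` exactly when all of `S` does. -/
noncomputable def sideCapacity (i : κ) (S : Side r) : ℚ :=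
  if i = r then 2 * S.1.card - 1 else if i ∈ S.1 then 2 else 0

theorem sideCapacity_nonneg (i : κ) (S : Side r) : 0 ≤ sideCapacity i S := by
  have hS : (1 : ℚ) ≤ S.1.card := by exact_mod_cast S.2.1.card_pos
  unfold sideCapacity
  split_ifs <;> linarith

theorem sum_sideCapacity {U : Finset κ} (hU : r ∉ U) (S : Side r) :
    ∑ i ∈ U, sideCapacity i S = 2 * (S.1 ∩ U).card := by
  calc ∑ i ∈ U, sideCapacity i S = ∑ i ∈ U, if i ∈ S.1 then 2 else 0 :=
        Finset.sum_congr rfl fun i hi ↦ if_neg (ne_of_mem_of_not_mem hi hU)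
    _ = 2 * (S.1 ∩ U).card := by
        rw [← Finset.sum_filter, Finset.filter_mem_eq_inter, Finset.inter_comm, Finset.sum_const,
          nsmul_eq_mul, mul_comm]

theorem sum_compl_sideCapacity [Fintype κ] {U : Finset κ} (hU : r ∉ U) (S : Side r) :
    ∑ i ∈ Uᶜ, sideCapacity i S = 2 * (S.1 ∩ U).card + (4 * (S.1 \ U).card - 1) := by
  have hr : r ∈ Uᶜ := Finset.mem_compl.2 hU
  have hinter : S.1 ∩ Uᶜ.erase r = S.1 \ U := by
    ext i
    have : i ∈ S.1 → i ≠ r := fun hi ↦ ne_of_mem_of_not_mem hi S.2.2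
    simp only [Finset.mem_inter, Finset.mem_erase, Finset.mem_compl, Finset.mem_sdiff]
    tauto
  have hcard : ((S.1 \ U).card + (S.1 ∩ U).card : ℚ) = S.1.card := by
    exact_mod_cast Finset.card_sdiff_add_card_inter S.1 U
  rw [← Finset.add_sum_erase _ _ hr, sum_sideCapacity (Finset.notMem_erase r _), hinter,
    sideCapacity, if_pos rfl, ← hcard]
  ring

theorem min_sum_sideCapacity [Fintype κ] {U : Finset κ} (hU : r ∉ U) (S : Side r) :
    min (∑ i ∈ U, sideCapacity i S) (∑ i ∈ Uᶜ, sideCapacity i S) =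
      2 * (S.1 ∩ U).card - if S.1 ⊆ U then 1 else 0 := by
  rw [sum_sideCapacity hU, sum_compl_sideCapacity hU]
  split_ifs with h
  · rw [Finset.sdiff_eq_empty_iff_subset.2 h, min_eq_right] <;> simp [sub_eq_add_neg]
  · have hpos : (1 : ℚ) ≤ (S.1 \ U).card := by
      exact_mod_cast (Finset.sdiff_nonempty.2 h).card_pos
    rw [min_eq_left] <;> linarith

theorem linearIndependent_two_mul_card_inter_sub_ite_subset [Finite κ] (r : κ) :
    LinearIndependent ℚ fun U S : Side r ↦
      (2 * (S.1 ∩ U.1).card - if S.1 ⊆ U.1 then 1 else 0 : ℚ) := by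
  have := Fintype.ofFinite κ
  rw [Fintype.linearIndependent_iff]
  intro x hx
  have hcol (S : Side r) :
      2 * ∑ i ∈ S.1, ∑ U : Side r with i ∈ U.1, x U = ∑ U : Side r with S.1 ⊆ U.1, x U := by
    have hS := congrFun hx S
    simp only [Finset.sum_apply, Pi.smul_apply, smul_eq_mul, Pi.zero_apply, mul_sub,
      Finset.sum_sub_distrib, mul_left_comm _ (2 : ℚ), ← Finset.mul_sum, mul_ite, mul_one, mul_zero,
      ← Finset.sum_filter, sum_mul_card_inter] at hS
    exact sub_eq_zero.1 hS
  have hsingleton (i : κ) (hi : i ≠ r) : ∑ U : Side r with i ∈ U.1, x U = 0 := by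
    have h := hcol ⟨{i}, Finset.singleton_nonempty i, by simpa using hi.symm⟩
    simp only [Finset.sum_singleton, Finset.singleton_subset_iff] at h
    linarith
  refine eq_zero_of_forall_sum_filter_le_eq_zero fun S ↦ ?_
  calc ∑ U with S ≤ U, x U
      = 2 * ∑ i ∈ S.1, ∑ U : Side r with i ∈ U.1, x U := (hcol S).symm
    _ = 0 := by
      rw [Finset.sum_eq_zero fun i hi ↦ hsingleton i (ne_of_mem_of_not_mem hi S.2.2), mul_zero]

theorem exists_linearIndependent_termCut [Finite κ] (r : κ) :
    ∃ G : WeightedGraph κ, LinearIndependent ℚ fun U : Side r ↦ G.termCut U := by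
  have := Fintype.ofFinite κ
  obtain ⟨w, hw, hli⟩ := exists_pos_linearIndependent_rat_real (Side r)
  refine ⟨_, linearIndependent_termCut_bipartite (fun S ↦ (hw S).le) hli sideCapacity_nonneg ?_⟩
  convert linearIndependent_two_mul_card_inter_sub_ite_subset r with U S
  exact min_sum_sideCapacity U.2.2 S

end Sides

end WeightedGraph

theorem two_mul_choose_two_add_one_le_sq {n : ℕ} (hn : 2 ≤ n) :
    2 * (n.choose 2 + 1) ≤ n ^ 2 := by
  have hsq : n * (n - 1) + n = n ^ 2 := by
    rw [sq, ← Nat.mul_succ, Nat.succ_eq_add_one, Nat.sub_add_cancel (by lia)]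
  have hchoose : 2 * n.choose 2 ≤ n * (n - 1) := by
    rw [Nat.choose_two_right]
    exact Nat.mul_div_le _ 2
  lia

theorem two_rpow_half_le_of_two_pow_le_sq {k n : ℕ} (h : 2 ^ k ≤ n ^ 2) :
    (2 : ℝ) ^ ((k : ℝ) / 2) ≤ n := by
  have hsq : (√2 ^ k) ^ 2 ≤ (n : ℝ) ^ 2 := by
    rw [pow_right_comm, Real.sq_sqrt zero_le_two]
    exact_mod_cast h
  rw [Real.rpow_div_two_eq_sqrt _ zero_le_two, Real.rpow_natCast]
  exact le_of_sq_le_sq hsq n.cast_nonneg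

theorem mimicking_network_lower_bound_general (κ : Type) [Fintype κ] [Nontrivial κ] :
    ∃ G : WeightedGraph κ, ∀ H : WeightedGraph κ, WeightedGraph.IsMimicking G H →
      (2 : ℝ) ^ ((Fintype.card κ : ℝ) / 2) ≤ Fintype.card H.V := by
  obtain ⟨r⟩ : Nonempty κ := inferInstance
  obtain ⟨G, hG⟩ := WeightedGraph.exists_linearIndependent_termCut r
  refine ⟨G, fun H hH ↦ two_rpow_half_le_of_two_pow_le_sq ?_⟩
  have hκ : 2 ≤ Fintype.card κ := Fintype.one_lt_card
  have hV : Fintype.card κ ≤ Fintype.card H.V := Fintype.card_le_of_embedding H.ι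
  have hside : Fintype.card (WeightedGraph.Side r) ≤ (Fintype.card H.V).choose 2 :=
    H.card_le_choose_two_of_linearIndependent_termCut (by simpa only [hH _] using hG)
  calc 2 ^ Fintype.card κ
      = 2 * (Fintype.card (WeightedGraph.Side r) + 1) := by
        rw [WeightedGraph.card_side_add_one, mul_pow_sub_one (by lia)]
    _ ≤ 2 * ((Fintype.card H.V).choose 2 + 1) := by gcongr
    _ ≤ Fintype.card H.V ^ 2 := two_mul_choose_two_add_one_le_sq (hκ.trans hV)

/-- for every `k ≥ 2` there is a weighted graph with `k` terminals all
of whose mimicking networks have at least `2^((k-1)/2)` vertices. -/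
theorem mimicking_network_lower_bound (k : ℕ) (hk : 2 ≤ k) :
    ∃ G : WeightedGraph (Fin k), ∀ H : WeightedGraph (Fin k),
      WeightedGraph.IsMimicking G H →
        (2 : ℝ) ^ (((k : ℝ) - 1) / 2) ≤ (Fintype.card H.V : ℝ) := by
  have : Nontrivial (Fin k) := Fin.nontrivial_iff_two_le.2 hk
  obtain ⟨G, hG⟩ := mimicking_network_lower_bound_general (Fin k)
  refine ⟨G, fun H hH ↦ (Real.rpow_le_rpow_of_exponent_le one_le_two ?_).trans (hG H hH)⟩
  rw [Fintype.card_fin]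
  linarith
end
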